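/- arXiv:1801.04307 — 2 statements merged into one kernel-verified Lean document; each statement's English description precedes it below -/
import Mathlib

section
/- Let N0, N1 be positive integers, L = lcm(N0, N1), and let a : {0,…,N0−1} × {0,…,N1−1} → ℂ be a (finitely supported) coefficient function defining the 2-D signal x(n0, n1) = Σ_{(m0,m1)} a(m0,m1)·exp(2πi·(m0·n0/N0 + m1·n1/N1)). For any integers α0, α1, τ0, τ1, define the line samples s(l) = x(α0·l + τ0, α1·l + τ1) for l = 0,…,L−1, and the L-point DFT ŝ(m) = (1/L)·Σ_{l=0}^{L−1} s(l)·exp(−2πi·l·m/L). Then for every m ∈ {0,…,L−1}, ŝ(m) = Σ a(m0,m1)·exp(2πi·(m0·τ0/N0 + m1·τ1/N1)), where the sum ranges over exactly those pairs (m0, m1) for which m0·α0/N0 + m1·α1/N1 − m/L is an integer. -/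
open Complex Finset
open scoped Classical

/-- The 2-D on-grid signal `x(n0,n1) = Σ_{(m0,m1)} a(m0,m1)·e^{2πi(m0·n0/N0 + m1·n1/N1)}`. -/
noncomputable def signal2D (N0 N1 : ℕ) (a : Fin N0 × Fin N1 → ℂ) (n0 n1 : ℤ) : ℂ :=
  ∑ p : Fin N0 × Fin N1, a p *
    Complex.exp (2 * (Real.pi : ℂ) * Complex.I *
      (((p.1 : ℕ) : ℂ) * (n0 : ℂ) / (N0 : ℂ) + ((p.2 : ℕ) : ℂ) * (n1 : ℂ) / (N1 : ℂ)))

/-- The `L`-point DFT of the slice of the signal along the discrete line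
`l ↦ (α0·l + τ0, α1·l + τ1)`, where `L = lcm(N0, N1)`. -/
noncomputable def sliceDFT (N0 N1 : ℕ) (a : Fin N0 × Fin N1 → ℂ)
    (α0 α1 τ0 τ1 : ℤ) (m : ℕ) : ℂ :=
  (1 / ((Nat.lcm N0 N1 : ℕ) : ℂ)) *
    ∑ l ∈ Finset.range (Nat.lcm N0 N1),
      signal2D N0 N1 a (α0 * l + τ0) (α1 * l + τ1) *
        Complex.exp (-(2 * (Real.pi : ℂ) * Complex.I * (l : ℂ) * (m : ℂ) /
          ((Nat.lcm N0 N1 : ℕ) : ℂ)))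

/-- The frequency grid point `(m0, m1)` projects onto bin `m`, i.e.
`m0·α0/N0 + m1·α1/N1 − m/L` is an integer. -/
def projectsTo (N0 N1 : ℕ) (α0 α1 : ℤ) (m : ℕ) (p : Fin N0 × Fin N1) : Prop :=
  ∃ k : ℤ, ((p.1 : ℕ) : ℝ) * (α0 : ℝ) / (N0 : ℝ) + ((p.2 : ℕ) : ℝ) * (α1 : ℝ) / (N1 : ℝ)
    - (m : ℝ) / ((Nat.lcm N0 N1 : ℕ) : ℝ) = (k : ℝ)

/-!
Let `θ = m0·α0/N0 + m1·α1/N1`. The exponent of a 2-D exponential is additive in the sampling point,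
so along the line the exponential of frequency `(m0, m1)` is a constant, its value at `(τ0, τ1)`,
times the 1-D exponential `l ↦ e^{2πi·l·θ}`. Since `L` is a common multiple of `N0` and `N1`,
`e^{2πi(θ - m/L)}` is an `L`-th root of unity, so the average of its powers over `0 ≤ l < L` is
`1` when `θ - m/L` is an integer and `0` otherwise.
-/

theorem geom_sum_eq_ite_of_pow_eq_one {R : Type*} [Ring R] [NoZeroDivisors R] [DecidableEq R]
    {ζ : R} {L : ℕ} (hζ : ζ ^ L = 1) : ∑ l ∈ range L, ζ ^ l = if ζ = 1 then (L : R) else 0 := by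
  split_ifs with h
  · simp [h]
  · have hmul : (∑ l ∈ range L, ζ ^ l) * (ζ - 1) = 0 := by rw [geom_sum_mul, hζ, sub_self]
    exact (mul_eq_zero.mp hmul).resolve_right (sub_ne_zero.mpr h)

theorem exp_two_pi_mul_I_mul_ofReal_eq_one_iff {θ : ℝ} :
    exp (2 * (Real.pi : ℂ) * I * (θ : ℂ)) = 1 ↔ ∃ k : ℤ, θ = k := by
  rw [exp_eq_one_iff]
  refine exists_congr fun k => ?_
  rw [mul_comm (k : ℂ), mul_right_inj' two_pi_I_ne_zero]
  norm_cast

theorem exists_div_mul_eq_intCast {K : Type*} [DivisionRing K] {d L : ℕ} (h : d ∣ L) (n : ℤ) :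
    ∃ j : ℤ, (n : K) / d * L = j := by
  obtain ⟨c, rfl⟩ := h
  rcases eq_or_ne (d : K) 0 with hd | hd
  · exact ⟨0, by simp [hd]⟩
  · refine ⟨n * c, ?_⟩
    push_cast
    rw [← mul_assoc, div_mul_cancel₀ _ hd]

/-- The `m`-th bin of the `L`-point discrete Fourier transform of a sequence, with the factor `1/L`
placed on the forward transform. -/
noncomputable def normalizedDFT (L : ℕ) (s : ℕ → ℂ) (m : ℕ) : ℂ :=
  (1 / (L : ℂ)) * ∑ l ∈ range L, s l * exp (-(2 * (Real.pi : ℂ) * I * (l : ℂ) * (m : ℂ) / (L : ℂ)))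

theorem normalizedDFT_sum_mul {ι : Type*} (S : Finset ι) (L : ℕ) (c : ι → ℂ) (s : ι → ℕ → ℂ)
    (m : ℕ) :
    normalizedDFT L (fun l => ∑ p ∈ S, c p * s p l) m = ∑ p ∈ S, c p * normalizedDFT L (s p) m := by
  simp only [normalizedDFT, sum_mul, mul_sum]
  rw [sum_comm]
  exact sum_congr rfl fun p _ => sum_congr rfl fun l _ => by ring

theorem normalizedDFT_exp {L : ℕ} (hL : L ≠ 0) {θ : ℝ} (hθ : ∃ j : ℤ, θ * L = j) (m : ℕ) :
    normalizedDFT L (fun l => exp (2 * (Real.pi : ℂ) * I * ((l : ℂ) * (θ : ℂ)))) m =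
      if ∃ k : ℤ, θ - (m : ℝ) / (L : ℝ) = k then 1 else 0 := by
  set ζ : ℂ := exp (2 * (Real.pi : ℂ) * I * ((θ - (m : ℝ) / (L : ℝ) : ℝ) : ℂ)) with hζ
  have hterm (l : ℕ) : exp (2 * (Real.pi : ℂ) * I * ((l : ℂ) * (θ : ℂ))) *
      exp (-(2 * (Real.pi : ℂ) * I * (l : ℂ) * (m : ℂ) / (L : ℂ))) = ζ ^ l := by
    rw [hζ, ← exp_add, ← exp_nat_mul]
    congr 1
    push_cast
    ring
  have hroot : ζ ^ L = 1 := by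
    obtain ⟨j, hj⟩ := hθ
    have hperiod : (L : ℝ) * (θ - (m : ℝ) / (L : ℝ)) = (j - m : ℤ) := by
      push_cast
      rw [← hj]
      field_simp
    rw [hζ, ← exp_nat_mul, mul_left_comm, ← ofReal_natCast, ← ofReal_mul]
    exact exp_two_pi_mul_I_mul_ofReal_eq_one_iff.mpr ⟨_, hperiod⟩
  have hone : ζ = 1 ↔ ∃ k : ℤ, θ - (m : ℝ) / (L : ℝ) = k :=
    exp_two_pi_mul_I_mul_ofReal_eq_one_iff
  have hLc : (L : ℂ) ≠ 0 := Nat.cast_ne_zero.mpr hL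
  simp only [normalizedDFT, hterm, geom_sum_eq_ite_of_pow_eq_one hroot, hone, mul_ite, mul_zero,
    one_div_mul_cancel hLc]

theorem normalizedDFT_sum_exp {ι : Type*} (S : Finset ι) {L : ℕ} (hL : L ≠ 0) (c : ι → ℂ)
    {θ : ι → ℝ} (hθ : ∀ p ∈ S, ∃ j : ℤ, θ p * L = j) (m : ℕ) :
    normalizedDFT L
        (fun l => ∑ p ∈ S, c p * exp (2 * (Real.pi : ℂ) * I * ((l : ℂ) * (θ p : ℂ)))) m =
      ∑ p ∈ S with ∃ k : ℤ, θ p - (m : ℝ) / (L : ℝ) = k, c p := by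
  rw [normalizedDFT_sum_mul, sum_filter]
  refine sum_congr rfl fun p hp => ?_
  rw [normalizedDFT_exp hL (hθ p hp), mul_ite, mul_one, mul_zero]

section GridPhase

variable {N0 N1 : ℕ}

/-- The phase, in full turns, at the integer point `(n0, n1)` of the 2-D exponential whose frequency
is the grid point `p = (m0, m1)`, namely `m0·n0/N0 + m1·n1/N1`. At `(α0, α1)` it is the frequency,
in turns per sample, that this exponential has along a line of direction `(α0, α1)`. -/
noncomputable def gridPhase (p : Fin N0 × Fin N1) (n0 n1 : ℤ) : ℝ :=
  ((p.1 : ℕ) : ℝ) * (n0 : ℝ) / (N0 : ℝ) + ((p.2 : ℕ) : ℝ) * (n1 : ℝ) / (N1 : ℝ)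

theorem ofReal_gridPhase (p : Fin N0 × Fin N1) (n0 n1 : ℤ) :
    (gridPhase p n0 n1 : ℂ) =
      ((p.1 : ℕ) : ℂ) * (n0 : ℂ) / (N0 : ℂ) + ((p.2 : ℕ) : ℂ) * (n1 : ℂ) / (N1 : ℂ) := by
  simp [gridPhase]

theorem gridPhase_line (p : Fin N0 × Fin N1) (α0 α1 τ0 τ1 l : ℤ) :
    gridPhase p (α0 * l + τ0) (α1 * l + τ1) = gridPhase p τ0 τ1 + l * gridPhase p α0 α1 := by
  simp only [gridPhase]
  push_cast
  ring

theorem exists_gridPhase_mul_eq_intCast {L : ℕ} (h0 : N0 ∣ L) (h1 : N1 ∣ L)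
    (p : Fin N0 × Fin N1) (n0 n1 : ℤ) : ∃ j : ℤ, gridPhase p n0 n1 * L = j := by
  obtain ⟨j0, hj0⟩ := exists_div_mul_eq_intCast (K := ℝ) h0 ((p.1 : ℕ) * n0)
  obtain ⟨j1, hj1⟩ := exists_div_mul_eq_intCast (K := ℝ) h1 ((p.2 : ℕ) * n1)
  refine ⟨j0 + j1, ?_⟩
  push_cast at hj0 hj1 ⊢
  rw [gridPhase, add_mul, hj0, hj1]

theorem signal2D_line (a : Fin N0 × Fin N1 → ℂ) (α0 α1 τ0 τ1 l : ℤ) :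
    signal2D N0 N1 a (α0 * l + τ0) (α1 * l + τ1) =
      ∑ p, a p * exp (2 * (Real.pi : ℂ) * I * (gridPhase p τ0 τ1 : ℂ)) *
        exp (2 * (Real.pi : ℂ) * I * ((l : ℂ) * (gridPhase p α0 α1 : ℂ))) := by
  refine sum_congr rfl fun p _ => ?_
  rw [← ofReal_gridPhase, gridPhase_line, mul_assoc (a p), ← exp_add, ← mul_add]
  push_cast
  rfl

end GridPhase

theorem fps_sft_projection_slice_general
    (N0 N1 : ℕ) (hN0 : 0 < N0) (hN1 : 0 < N1)
    (a : Fin N0 × Fin N1 → ℂ) (α0 α1 τ0 τ1 : ℤ) (m : ℕ) :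
    sliceDFT N0 N1 a α0 α1 τ0 τ1 m =
      ∑ p ∈ Finset.univ.filter (projectsTo N0 N1 α0 α1 m),
        a p * Complex.exp (2 * (Real.pi : ℂ) * Complex.I *
          (((p.1 : ℕ) : ℂ) * (τ0 : ℂ) / (N0 : ℂ) + ((p.2 : ℕ) : ℂ) * (τ1 : ℂ) / (N1 : ℂ))) := by
  have hfreq (p : Fin N0 × Fin N1) : ∃ j : ℤ, gridPhase p α0 α1 * (Nat.lcm N0 N1 : ℕ) = j :=
    exists_gridPhase_mul_eq_intCast (Nat.dvd_lcm_left N0 N1) (Nat.dvd_lcm_right N0 N1) p α0 α1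
  calc sliceDFT N0 N1 a α0 α1 τ0 τ1 m
      = normalizedDFT (Nat.lcm N0 N1) (fun l => signal2D N0 N1 a (α0 * l + τ0) (α1 * l + τ1)) m :=
        rfl
    _ = ∑ p with ∃ k : ℤ, gridPhase p α0 α1 - (m : ℝ) / (Nat.lcm N0 N1 : ℕ) = k,
          a p * exp (2 * (Real.pi : ℂ) * I * (gridPhase p τ0 τ1 : ℂ)) := by
        simp only [signal2D_line, Int.cast_natCast]
        exact normalizedDFT_sum_exp univ (Nat.lcm_pos hN0 hN1).ne' _ (fun p _ => hfreq p) m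
    _ = ∑ p with projectsTo N0 N1 α0 α1 m p,
          a p * exp (2 * (Real.pi : ℂ) * I * (gridPhase p τ0 τ1 : ℂ)) := rfl
    _ = _ := by simp only [ofReal_gridPhase]

/-- **Fourier projection-slice identity of FPS-SFT.** For every bin
`m ∈ {0,…,L−1}`, the `L`-point DFT of the line samples equals the sum of
`a(m0,m1)·e^{2πi(m0·τ0/N0 + m1·τ1/N1)}` over exactly those pairs `(m0, m1)`
for which `m0·α0/N0 + m1·α1/N1 − m/L` is an integer. -/
theorem fps_sft_projection_slice
    (N0 N1 : ℕ) (hN0 : 0 < N0) (hN1 : 0 < N1)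
    (a : Fin N0 × Fin N1 → ℂ) (α0 α1 τ0 τ1 : ℤ) :
    ∀ m ∈ Finset.range (Nat.lcm N0 N1),
      sliceDFT N0 N1 a α0 α1 τ0 τ1 m =
        ∑ p ∈ Finset.univ.filter (projectsTo N0 N1 α0 α1 m),
          a p * Complex.exp (2 * (Real.pi : ℂ) * Complex.I *
            (((p.1 : ℕ) : ℂ) * (τ0 : ℂ) / (N0 : ℂ) + ((p.2 : ℕ) : ℂ) * (τ1 : ℂ) / (N1 : ℂ))) := by
  intro m _
  exact fps_sft_projection_slice_general N0 N1 hN0 hN1 a α0 α1 τ0 τ1 m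
end

section
/- With the setup of the projection-slice identity, suppose bin m is 1-sparse with unique contributing pair (m0, m1), a(m0, m1) ≠ 0. Let ŝ_τ denote the slice DFT with offsets τ = (τ0, τ1), ŝ_{τ⁰} the slice DFT with offsets (τ0 + 1, τ1), and ŝ_{τ¹} the slice DFT with offsets (τ0, τ1 + 1), all with the same slope (α0, α1). Then ŝ_{τ⁰}(m) / ŝ_τ(m) = exp(2πi·m0/N0) and ŝ_{τ¹}(m) / ŝ_τ(m) = exp(2πi·m1/N1); i.e., the two frequency components are independently encoded in the phases of the two ratios. -/
open Complex Finset
open scoped Classical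

/-!
Along a slice each grid frequency contributes a geometric progression in `l`, and after
multiplication by the DFT kernel its ratio is an `L`-th root of unity. Hence bin `m` of the slice
DFT keeps exactly the frequencies whose ratio is `1`, i.e. those projecting onto `m`: this is the
projection-slice identity. In a 1-sparse bin a single term `a p₀ · χ(τ)` survives, where `χ` is an
additive character of `ℤ × ℤ`; in the ratio of the bins at two offsets the unknown amplitude cancels
and leaves `χ` at the difference of the offsets.
-/

theorem sum_range_pow_of_pow_eq_one {R : Type*} [Ring R] [NoZeroDivisors R] [DecidableEq R]
    {z : R} {n : ℕ} (hz : z ^ n = 1) :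
    ∑ l ∈ range n, z ^ l = if z = 1 then (n : R) else 0 := by
  split_ifs with h
  · simp [h]
  · have hmul : (∑ l ∈ range n, z ^ l) * (z - 1) = 0 := by rw [geom_sum_mul, hz, sub_self]
    exact (mul_eq_zero.mp hmul).resolve_right (sub_ne_zero.mpr h)

section ProjectionSlice

variable {N0 N1 : ℕ}

theorem lcm_cast_ne_zero (p : Fin N0 × Fin N1) : (Nat.lcm N0 N1 : ℂ) ≠ 0 :=
  Nat.cast_ne_zero.mpr (Nat.lcm_ne_zero p.1.pos.ne' p.2.pos.ne')

/-- The harmonic `(n0, n1) ↦ e^{2πi(m0·n0/N0 + m1·n1/N1)}` of grid frequency `p = (m0, m1)`, bundled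
as an additive character so that shifts of the argument become factors. -/
noncomputable def gridChar (p : Fin N0 × Fin N1) : AddChar (ℤ × ℤ) ℂ where
  toFun n := Complex.exp (2 * (Real.pi : ℂ) * I *
    (((p.1 : ℕ) : ℂ) * (n.1 : ℂ) / (N0 : ℂ) + ((p.2 : ℕ) : ℂ) * (n.2 : ℂ) / (N1 : ℂ)))
  map_zero_eq_one' := by simp
  map_add_eq_mul' n k := by
    rw [← Complex.exp_add, Prod.fst_add, Prod.snd_add]
    congr 1
    push_cast
    ring

theorem gridChar_apply (p : Fin N0 × Fin N1) (n : ℤ × ℤ) :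
    gridChar p n = Complex.exp (2 * (Real.pi : ℂ) * I *
      (((p.1 : ℕ) : ℂ) * (n.1 : ℂ) / (N0 : ℂ) + ((p.2 : ℕ) : ℂ) * (n.2 : ℂ) / (N1 : ℂ))) :=
  rfl

theorem signal2D_eq_sum_gridChar (a : Fin N0 × Fin N1 → ℂ) (n0 n1 : ℤ) :
    signal2D N0 N1 a n0 n1 = ∑ p, a p * gridChar p (n0, n1) :=
  rfl

theorem gridChar_eq_one_of_dvd (p : Fin N0 × Fin N1) {n : ℤ × ℤ}
    (h0 : (N0 : ℤ) ∣ n.1) (h1 : (N1 : ℤ) ∣ n.2) : gridChar p n = 1 := by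
  obtain ⟨k0, hk0⟩ := h0
  obtain ⟨k1, hk1⟩ := h1
  have hN0 : (N0 : ℂ) ≠ 0 := Nat.cast_ne_zero.mpr p.1.pos.ne'
  have hN1 : (N1 : ℂ) ≠ 0 := Nat.cast_ne_zero.mpr p.2.pos.ne'
  rw [gridChar_apply, Complex.exp_eq_one_iff, hk0, hk1]
  refine ⟨(p.1 : ℕ) * k0 + (p.2 : ℕ) * k1, ?_⟩
  push_cast
  field_simp

theorem gridChar_pow_lcm (p : Fin N0 × Fin N1) (n : ℤ × ℤ) :
    gridChar p n ^ Nat.lcm N0 N1 = 1 := by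
  rw [← AddChar.map_nsmul_eq_pow]
  apply gridChar_eq_one_of_dvd
  · simpa using (Int.natCast_dvd_natCast.mpr (Nat.dvd_lcm_left N0 N1)).mul_right n.1
  · simpa using (Int.natCast_dvd_natCast.mpr (Nat.dvd_lcm_right N0 N1)).mul_right n.2

/-- The factor by which the contribution of frequency `p` to the `m`-th DFT sum of a slice with
slope `(α0, α1)` is multiplied from one sample to the next: the character of `p` at the slope,
times one step of the DFT kernel. -/
noncomputable def binRatio (α0 α1 : ℤ) (m : ℕ) (p : Fin N0 × Fin N1) : ℂ :=
  gridChar p (α0, α1) * Complex.exp (-(2 * (Real.pi : ℂ) * I * (m : ℂ) / (Nat.lcm N0 N1 : ℂ)))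

theorem binRatio_eq_one_iff (α0 α1 : ℤ) (m : ℕ) (p : Fin N0 × Fin N1) :
    binRatio α0 α1 m p = 1 ↔ projectsTo N0 N1 α0 α1 m p := by
  have hexp : binRatio α0 α1 m p = Complex.exp (2 * (Real.pi : ℂ) * I *
      (((p.1 : ℕ) : ℂ) * (α0 : ℂ) / (N0 : ℂ) + ((p.2 : ℕ) : ℂ) * (α1 : ℂ) / (N1 : ℂ)
        - (m : ℂ) / (Nat.lcm N0 N1 : ℂ))) := by
    rw [binRatio, gridChar_apply, ← Complex.exp_add]
    congr 1
    ring
  rw [hexp, Complex.exp_eq_one_iff, projectsTo]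
  refine exists_congr fun k => ?_
  rw [mul_comm (k : ℂ), mul_right_inj' Complex.two_pi_I_ne_zero, ← Complex.ofReal_inj]
  push_cast
  rfl

theorem binRatio_pow_lcm (α0 α1 : ℤ) (m : ℕ) (p : Fin N0 × Fin N1) :
    binRatio α0 α1 m p ^ Nat.lcm N0 N1 = 1 := by
  have hL := lcm_cast_ne_zero p
  rw [binRatio, mul_pow, gridChar_pow_lcm, one_mul, ← Complex.exp_nat_mul, Complex.exp_eq_one_iff]
  refine ⟨-m, ?_⟩
  push_cast
  field_simp

theorem sum_binRatio_pow (α0 α1 : ℤ) (m : ℕ) (p : Fin N0 × Fin N1) :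
    ∑ l ∈ range (Nat.lcm N0 N1), binRatio α0 α1 m p ^ l =
      if projectsTo N0 N1 α0 α1 m p then (Nat.lcm N0 N1 : ℂ) else 0 := by
  simp only [sum_range_pow_of_pow_eq_one (binRatio_pow_lcm α0 α1 m p), binRatio_eq_one_iff]

theorem gridChar_slice_mul_exp (α0 α1 τ0 τ1 : ℤ) (m l : ℕ) (p : Fin N0 × Fin N1) :
    gridChar p (α0 * l + τ0, α1 * l + τ1) *
        Complex.exp (-(2 * (Real.pi : ℂ) * I * (l : ℂ) * (m : ℂ) / (Nat.lcm N0 N1 : ℂ))) =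
      gridChar p (τ0, τ1) * binRatio α0 α1 m p ^ l := by
  have hline : ((α0 * l + τ0, α1 * l + τ1) : ℤ × ℤ) = l • (α0, α1) + (τ0, τ1) := by
    simp [mul_comm]
  have hkernel : Complex.exp (-(2 * (Real.pi : ℂ) * I * (l : ℂ) * (m : ℂ) / (Nat.lcm N0 N1 : ℂ))) =
      Complex.exp (-(2 * (Real.pi : ℂ) * I * (m : ℂ) / (Nat.lcm N0 N1 : ℂ))) ^ l := by
    rw [← Complex.exp_nat_mul]
    congr 1
    ring
  rw [hline, hkernel, AddChar.map_add_eq_mul, AddChar.map_nsmul_eq_pow, binRatio]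
  ring

theorem sliceDFT_eq_sum_projectsTo (a : Fin N0 × Fin N1 → ℂ) (α0 α1 τ0 τ1 : ℤ) (m : ℕ) :
    sliceDFT N0 N1 a α0 α1 τ0 τ1 m =
      ∑ p with projectsTo N0 N1 α0 α1 m p, a p * gridChar p (τ0, τ1) := by
  simp only [sliceDFT, signal2D_eq_sum_gridChar, sum_mul, mul_assoc (a _), gridChar_slice_mul_exp]
  rw [sum_comm, mul_sum, sum_filter]
  refine sum_congr rfl fun p _ => ?_
  have hL := lcm_cast_ne_zero p
  rw [← mul_sum, ← mul_sum, sum_binRatio_pow]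
  split_ifs
  · field_simp
  · simp

theorem sliceDFT_of_unique_projectsTo {a : Fin N0 × Fin N1 → ℂ} {α0 α1 : ℤ} {m : ℕ}
    {p₀ : Fin N0 × Fin N1} (hproj : projectsTo N0 N1 α0 α1 m p₀)
    (huniq : ∀ q, a q ≠ 0 → projectsTo N0 N1 α0 α1 m q → q = p₀) (τ0 τ1 : ℤ) :
    sliceDFT N0 N1 a α0 α1 τ0 τ1 m = a p₀ * gridChar p₀ (τ0, τ1) := by
  rw [sliceDFT_eq_sum_projectsTo]
  refine sum_eq_single_of_mem p₀ (by simpa using hproj) fun q hq hne => ?_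
  have haq : a q = 0 := by
    by_contra haq
    exact hne (huniq q haq (mem_filter.mp hq).2)
  rw [haq, zero_mul]

end ProjectionSlice

theorem fps_sft_frequency_decoding_general
    {N0 N1 : ℕ} {a : Fin N0 × Fin N1 → ℂ} {α0 α1 : ℤ} {m : ℕ}
    {p₀ : Fin N0 × Fin N1} (ha : a p₀ ≠ 0)
    (hproj : projectsTo N0 N1 α0 α1 m p₀)
    (huniq : ∀ q, a q ≠ 0 → projectsTo N0 N1 α0 α1 m q → q = p₀) (τ0 τ1 δ0 δ1 : ℤ) :
    sliceDFT N0 N1 a α0 α1 (τ0 + δ0) (τ1 + δ1) m / sliceDFT N0 N1 a α0 α1 τ0 τ1 m =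
      Complex.exp (2 * (Real.pi : ℂ) * I *
        (((p₀.1 : ℕ) : ℂ) * (δ0 : ℂ) / (N0 : ℂ) + ((p₀.2 : ℕ) : ℂ) * (δ1 : ℂ) / (N1 : ℂ))) := by
  rw [sliceDFT_of_unique_projectsTo hproj huniq, sliceDFT_of_unique_projectsTo hproj huniq,
    mul_div_mul_left _ _ ha, ← AddChar.map_sub_eq_div, Prod.mk_sub_mk, add_sub_cancel_left,
    add_sub_cancel_left, gridChar_apply]

/-- **OFDM-trick frequency decoding (equation (9) of the paper).** If bin `m` is
1-sparse with unique contributing pair `(m0, m1)`, then the ratios of the slice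
DFTs taken with offsets `(τ0+1, τ1)` and `(τ0, τ1+1)` to the one with offsets
`(τ0, τ1)` equal `e^{2πi·m0/N0}` and `e^{2πi·m1/N1}` respectively: the two
frequency components are independently encoded in the phases of the two ratios. -/
theorem fps_sft_frequency_decoding
    (N0 N1 : ℕ) (hN0 : 0 < N0) (hN1 : 0 < N1)
    (a : Fin N0 × Fin N1 → ℂ) (α0 α1 τ0 τ1 : ℤ)
    (m : ℕ) (hm : m ∈ Finset.range (Nat.lcm N0 N1))
    (p₀ : Fin N0 × Fin N1) (ha : a p₀ ≠ 0)
    (hproj : projectsTo N0 N1 α0 α1 m p₀)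
    (huniq : ∀ q : Fin N0 × Fin N1, a q ≠ 0 → projectsTo N0 N1 α0 α1 m q → q = p₀) :
    sliceDFT N0 N1 a α0 α1 (τ0 + 1) τ1 m / sliceDFT N0 N1 a α0 α1 τ0 τ1 m =
      Complex.exp (2 * (Real.pi : ℂ) * Complex.I * (((p₀.1 : ℕ) : ℂ) / (N0 : ℂ))) ∧
    sliceDFT N0 N1 a α0 α1 τ0 (τ1 + 1) m / sliceDFT N0 N1 a α0 α1 τ0 τ1 m =
      Complex.exp (2 * (Real.pi : ℂ) * Complex.I * (((p₀.2 : ℕ) : ℂ) / (N1 : ℂ))) := by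
  constructor
  · simpa using fps_sft_frequency_decoding_general ha hproj huniq τ0 τ1 1 0
  · simpa using fps_sft_frequency_decoding_general ha hproj huniq τ0 τ1 0 1
end
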